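/- Fix m ≥ 2 and a hierarchy S of size m, let H^{(m)}_n denote the number of isomorphism classes of hierarchies of size n containing no subhierarchy isomorphic to S, and let ρ_m be the radius of convergence of the real power series H^{(m)}(x) = Σ_{n≥1} H^{(m)}_n xⁿ. Then Σ_{n≥1} H^{(m)}_n ρ_mⁿ = (1 + ρ_m − ρ_m^m)/2. -/

import Mathlib

/-- Finite rooted unordered trees, presented with an ordered list of children
(unorderedness is taken care of by the isomorphism relation `RTree.Iso`). -/
inductive RTree : Type
  | node : List RTree → RTree

/-- The number of leaves (external vertices) of a rooted tree: the *size* of a hierarchy. -/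
def RTree.leaves : RTree → ℕ
  | .node [] => 1
  | .node (a :: l) => ((a :: l).attach.map (fun x => RTree.leaves x.1)).sum
decreasing_by
  have := List.sizeOf_lt_of_mem x.2
  simp only [RTree.node.sizeOf_spec]
  omega

/-- A hierarchy: a rooted tree in which no vertex has exactly one child. -/
inductive RTree.IsHierarchy : RTree → Prop
  | node {l : List RTree} : l.length ≠ 1 → (∀ t ∈ l, RTree.IsHierarchy t) →
      RTree.IsHierarchy (.node l)

/-- `s.SubtreeOf t` : `s` is the subtree of `t` rooted at some vertex of `t`
(that vertex together with all of its descendants). -/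
inductive RTree.SubtreeOf : RTree → RTree → Prop
  | refl (t : RTree) : RTree.SubtreeOf t t
  | child {s c : RTree} {l : List RTree} : c ∈ l → RTree.SubtreeOf s c →
      RTree.SubtreeOf s (.node l)

/-- Isomorphism of rooted unordered trees: the children of the two roots can be
matched up bijectively by isomorphisms. -/
inductive RTree.Iso : RTree → RTree → Prop
  | node {l₁ l l₂ : List RTree} (h₁ : List.Forall₂ RTree.Iso l₁ l) (h₂ : l.Perm l₂) :
      RTree.Iso (.node l₁) (.node l₂)

/-- The number of isomorphism classes of hierarchies of size `n` (OEIS A000669). -/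
noncomputable def hierarchyCount (n : ℕ) : ℕ :=
  Nat.card (Quot fun a b : {t : RTree // t.IsHierarchy ∧ t.leaves = n} => RTree.Iso a.1 b.1)

/-- `t` contains no subhierarchy isomorphic to `S`. -/
def RTree.Avoids (t S : RTree) : Prop :=
  ∀ s : RTree, s.SubtreeOf t → ¬ RTree.Iso s S

/-- The number of isomorphism classes of hierarchies of size `n` containing
no subhierarchy isomorphic to `S`. -/
noncomputable def avoidCount (S : RTree) (n : ℕ) : ℕ :=
  Nat.card (Quot fun a b : {t : RTree // t.IsHierarchy ∧ t.leaves = n ∧ t.Avoids S} =>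
    RTree.Iso a.1 b.1)

/-- The radius of convergence of the real power series `∑ₙ aₙ xⁿ`. -/
noncomputable def radiusOf (a : ℕ → ℝ) : ENNReal :=
  (FormalMultilinearSeries.ofScalars ℝ a).radius

/-!
Let `m` be the size of `S`, and let `H(x) = ∑ x ^ |c|` over the isomorphism classes `c` of
hierarchies avoiding `S`. A class is determined by the multiset of the classes of its children, so
the avoiding hierarchies other than the leaf, together with `S` itself, correspond to the multisets
of at least two avoiding classes. With `u(x) = ∑ -log (1 - x ^ |c|)` this reads
`exp u = 1 + 2 H - x + x ^ m`, or `exp u = 1 + 2 u - D` where `D = 2 (u - H) + x - x ^ m`.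

Inside the disc of convergence `D` is strictly increasing in `x`, so `exp u - 2 u = 1 - D` is
strictly decreasing while `u` is increasing. As `exp u - 2 u` increases with `u` beyond `log 2`, its
unique minimum, `u < log 2` there, and hence the series converges at its radius `ρ`, with
`u(ρ) ≤ log 2`. If this were strict, then `D(ρ) < 2 log 2 - 1`. As `u - H` converges as far as
`√ρ`, `D` is continuous at `ρ` and stays below this critical value slightly beyond `ρ`, where the
functional equation, truncated by weight, then bounds the partial sums of `H` inductively. This
contradicts the definition of `ρ`. So `exp u(ρ) = 2`, which is the claimed value of `H(ρ)`.
-/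

section LogTail

/-- The tail `∑ k ≥ 2, t ^ k / k` of the logarithmic series `-log (1 - t)`. -/
noncomputable def logTail (t : ℝ) : ℝ := -Real.log (1 - t) - t

lemma add_logTail (t : ℝ) : t + logTail t = -Real.log (1 - t) := by
  unfold logTail; ring

lemma logTail_nonneg {t : ℝ} (ht : t < 1) : 0 ≤ logTail t := by
  have := Real.log_le_sub_one_of_pos (sub_pos.2 ht)
  unfold logTail; linarith

lemma neg_log_one_sub_le {t : ℝ} (ht : t < 1) : -Real.log (1 - t) ≤ t / (1 - t) := by
  have h1 : 0 < 1 - t := sub_pos.2 ht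
  have h := Real.one_sub_inv_le_log_of_pos h1
  have h2 : t / (1 - t) = (1 - t)⁻¹ - 1 := by field_simp; ring
  linarith

lemma logTail_le {t : ℝ} (ht : t < 1) : logTail t ≤ t ^ 2 / (1 - t) := by
  have h : t ^ 2 / (1 - t) = t / (1 - t) - t := by
    have := sub_ne_zero.2 ht.ne'
    field_simp; ring
  unfold logTail; linarith [neg_log_one_sub_le ht]

lemma logTail_pow_le {x : ℝ} (h0 : 0 ≤ x) (h1 : x < 1) {n : ℕ} (hn : n ≠ 0) :
    logTail (x ^ n) ≤ (x ^ 2) ^ n / (1 - x) := by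
  have hx : x ^ n ≤ x := pow_le_of_le_one h0 h1.le hn
  calc logTail (x ^ n) ≤ (x ^ n) ^ 2 / (1 - x ^ n) := logTail_le (hx.trans_lt h1)
    _ ≤ (x ^ n) ^ 2 / (1 - x) := by have := sub_pos.2 h1; gcongr
    _ = (x ^ 2) ^ n / (1 - x) := by rw [← pow_mul, ← pow_mul, mul_comm]

lemma sub_div_one_sub_lt_log_sub_log {x z : ℝ} (hxz : x < z) (hz : z < 1) :
    (z - x) / (1 - x) < Real.log (1 - x) - Real.log (1 - z) := by
  have hx1 : 0 < 1 - x := by linarith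
  have hz1 : 0 < 1 - z := by linarith
  have hne : (1 - z) / (1 - x) ≠ 1 := by
    rw [ne_eq, div_eq_one_iff_eq hx1.ne']; linarith
  have h := Real.log_lt_sub_one_of_pos (div_pos hz1 hx1) hne
  rw [Real.log_div hz1.ne' hx1.ne'] at h
  have h2 : (z - x) / (1 - x) = 1 - (1 - z) / (1 - x) := by field_simp; ring
  linarith

lemma logTail_mono {x z : ℝ} (hx : 0 ≤ x) (hxz : x ≤ z) (hz : z < 1) :
    logTail x ≤ logTail z := by
  rcases hxz.eq_or_lt with rfl | hxz
  · rfl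
  have h := sub_div_one_sub_lt_log_sub_log hxz hz
  have h2 : z - x ≤ (z - x) / (1 - x) :=
    le_div_self (sub_nonneg.2 hxz.le) (by linarith) (by linarith)
  unfold logTail; linarith

lemma pow_sub_pow_le_sub_div {x z : ℝ} (hx : 0 ≤ x) (hxz : x ≤ z) (hz : z ≤ 1) (hx1 : x < 1)
    (m : ℕ) : z ^ m - x ^ m ≤ (z - x) / (1 - x) := by
  have hsum : ∑ i ∈ Finset.range m, z ^ i * x ^ (m - 1 - i) ≤ (1 - x)⁻¹ :=
    calc ∑ i ∈ Finset.range m, z ^ i * x ^ (m - 1 - i)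
      _ ≤ ∑ i ∈ Finset.range m, x ^ (m - 1 - i) := Finset.sum_le_sum fun i _ ↦
          mul_le_of_le_one_left (pow_nonneg hx _) (pow_le_one₀ (hx.trans hxz) hz)
      _ = ∑ i ∈ Finset.range m, x ^ i := Finset.sum_range_reflect (x ^ ·) m
      _ ≤ (1 - x)⁻¹ := tsum_geometric_of_lt_one hx hx1 ▸
          (summable_geometric_of_lt_one hx hx1).sum_le_tsum _ fun i _ ↦ pow_nonneg hx i
  rw [← (Commute.all z x).geom_sum₂_mul, mul_comm, div_eq_mul_inv]
  exact mul_le_mul_of_nonneg_left hsum (sub_nonneg.2 hxz)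

lemma two_mul_logTail_add_sub_pow_strictMono {x z : ℝ} (hx : 0 ≤ x) (hxz : x < z) (hz : z < 1)
    (m : ℕ) : 2 * logTail x + x - x ^ m < 2 * logTail z + z - z ^ m := by
  have h := sub_div_one_sub_lt_log_sub_log hxz hz
  have h2 : z - x ≤ (z - x) / (1 - x) :=
    le_div_self (sub_nonneg.2 hxz.le) (by linarith) (by linarith)
  have h3 := pow_sub_pow_le_sub_div hx hxz.le hz.le (hxz.trans hz) m
  unfold logTail; linarith

end LogTail

lemma exp_sub_two_mul_gt {u : ℝ} (hu : u ≠ Real.log 2) :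
    2 - 2 * Real.log 2 < Real.exp u - 2 * u := by
  have h := Real.add_one_lt_exp (sub_ne_zero.2 hu)
  rw [Real.exp_sub, Real.exp_log two_pos, lt_div_iff₀ two_pos] at h
  linarith

lemma exp_sub_self_mono {u v : ℝ} (hu : 0 ≤ u) (huv : u ≤ v) :
    Real.exp u - u ≤ Real.exp v - v := by
  have h := Real.add_one_le_exp (v - u)
  rw [Real.exp_sub, le_div_iff₀ (Real.exp_pos u)] at h
  nlinarith [Real.add_one_le_exp u]

section MultisetSeries

open Finset

lemma hasSum_prod_fin {κ : Type*} {n : ℕ} {f : Fin n → κ → ℝ} {a : Fin n → ℝ}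
    (h0 : ∀ i k, 0 ≤ f i k) (h : ∀ i, HasSum (f i) (a i)) :
    HasSum (fun g : Fin n → κ ↦ ∏ i, f i (g i)) (∏ i, a i) := by
  induction n with
  | zero => simp
  | succ n ih =>
    have htail := ih (fun i ↦ h0 i.succ) (fun i ↦ h i.succ)
    have hnonneg (g : Fin n → κ) : 0 ≤ ∏ i, f (Fin.succ i) (g i) := prod_nonneg fun i _ ↦ h0 _ _
    have hsum := (h 0).summable.mul_of_nonneg htail.summable (h0 0) hnonneg
    rw [Fin.prod_univ_succ, ← (Fin.consEquiv fun _ ↦ κ).hasSum_iff]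
    simpa [Function.comp_def, Fin.prod_univ_succ] using (h 0).mul htail hsum

lemma hasSum_prod_pi {ι κ : Type*} [Fintype ι] {f : ι → κ → ℝ} {a : ι → ℝ}
    (h0 : ∀ i k, 0 ≤ f i k) (h : ∀ i, HasSum (f i) (a i)) :
    HasSum (fun g : ι → κ ↦ ∏ i, f i (g i)) (∏ i, a i) := by
  let e := (Fintype.equivFin ι).symm
  rw [← e.prod_comp, ← (e.arrowCongr (Equiv.refl κ)).hasSum_iff]
  simpa [Function.comp_def, ← e.prod_comp] using
    hasSum_prod_fin (fun i ↦ h0 (e i)) (fun i ↦ h (e i))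

lemma hasSum_multiset_prod_of_fintype {ι : Type*} [Fintype ι] {t : ι → ℝ} (h0 : ∀ i, 0 ≤ t i)
    (h1 : ∀ i, t i < 1) :
    HasSum (fun s : Multiset ι ↦ (s.map t).prod) (∏ i, (1 - t i)⁻¹) := by
  classical
  have h := hasSum_prod_pi (fun i k ↦ pow_nonneg (h0 i) k)
    fun i ↦ hasSum_geometric_of_lt_one (h0 i) (h1 i)
  rw [← (Multiset.toFinsupp.toEquiv.trans Finsupp.equivFunOnFinite).hasSum_iff] at h
  convert h using 2 with s
  rw [prod_multiset_map_count]
  exact prod_subset (subset_univ _) fun i _ hi ↦ by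
    rw [Multiset.count_eq_zero.2 (by simpa using hi), pow_zero]

lemma exp_sum_neg_log_one_sub {ι : Type*} {t : ι → ℝ} (h1 : ∀ i, t i < 1) (E : Finset ι) :
    Real.exp (∑ i ∈ E, -Real.log (1 - t i)) = ∏ i ∈ E, (1 - t i)⁻¹ := by
  simp_rw [Real.exp_sum, ← Real.log_inv, Real.exp_log (inv_pos.2 (sub_pos.2 (h1 _)))]

lemma exists_subset_range_multiset_map_val {ι : Type*} (Z : Finset (Multiset ι)) :
    ∃ E : Finset ι, ↑Z ⊆ Set.range (Multiset.map ((↑) : E → ι)) := by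
  classical
  refine ⟨Z.biUnion Multiset.toFinset, fun s hs ↦ ?_⟩
  have hsE : ∀ i ∈ s, i ∈ Z.biUnion Multiset.toFinset :=
    fun i hi ↦ mem_biUnion.2 ⟨s, hs, Multiset.mem_toFinset.2 hi⟩
  lift s to Multiset (Z.biUnion Multiset.toFinset) using hsE
  exact ⟨s, rfl⟩

lemma summable_neg_log_one_sub {ι : Type*} {t : ι → ℝ} (ht : Summable t) :
    Summable fun i ↦ -Real.log (1 - t i) := by
  simpa [sub_eq_add_neg] using (Real.summable_log_one_add_of_summable ht.neg).neg

lemma hasSum_multiset_prod {ι : Type*} {t : ι → ℝ} (h0 : ∀ i, 0 ≤ t i) (h1 : ∀ i, t i < 1)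
    (ht : Summable t) :
    HasSum (fun s : Multiset ι ↦ (s.map t).prod) (Real.exp (∑' i, -Real.log (1 - t i))) := by
  have hlog := (summable_neg_log_one_sub ht).hasSum
  have hlog_nonneg (i : ι) : 0 ≤ -Real.log (1 - t i) :=
    neg_nonneg.2 (Real.log_nonpos (sub_pos.2 (h1 i)).le (sub_le_self _ (h0 i)))
  have hnonneg (s : Multiset ι) : 0 ≤ (s.map t).prod :=
    Multiset.prod_nonneg (by simp +contextual [h0])
  have hinj (E : Finset ι) : Function.Injective (Multiset.map ((↑) : E → ι)) :=
    Multiset.map_injective Subtype.val_injective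
  have hfin (E : Finset ι) : HasSum (fun s : Multiset E ↦ ((s.map (↑)).map t).prod)
      (Real.exp (∑ i ∈ E, -Real.log (1 - t i))) := by
    rw [exp_sum_neg_log_one_sub h1, ← prod_coe_sort]
    simpa [Multiset.map_map] using
      hasSum_multiset_prod_of_fintype (fun i : E ↦ h0 i) (fun i : E ↦ h1 i)
  refine hasSum_of_isLUB_of_nonneg _ hnonneg ⟨?_, fun b hb ↦ ?_⟩
  · rintro _ ⟨Z, rfl⟩
    obtain ⟨E, hE⟩ := exists_subset_range_multiset_map_val Z
    calc ∑ s ∈ Z, (s.map t).prod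
        = ∑ s ∈ Z.preimage _ (hinj E).injOn, ((s.map (↑)).map t).prod :=
          (sum_preimage _ Z (hinj E).injOn _ fun s hs hs' ↦ (hs' (hE hs)).elim).symm
      _ ≤ Real.exp (∑ i ∈ E, -Real.log (1 - t i)) := sum_le_hasSum _ (fun s _ ↦ hnonneg _) (hfin E)
      _ ≤ Real.exp (∑' i, -Real.log (1 - t i)) :=
          Real.exp_le_exp.2 (sum_le_hasSum _ (fun i _ ↦ hlog_nonneg i) hlog)
  · refine le_of_tendsto' ((Real.continuous_exp.tendsto _).comp hlog) fun E ↦ ?_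
    refine hasSum_le_of_sum_le (hfin E) fun Z ↦ ?_
    exact (sum_map Z ⟨_, hinj E⟩ fun s ↦ (s.map t).prod).symm.trans_le (hb ⟨_, rfl⟩)

end MultisetSeries

section FibreCount

variable {ι : Type*} {w : ι → ℕ} {f : ℕ → ℝ}

lemma natCard_fiber_mul_eq_tsum (n : ℕ) :
    (Nat.card {i // w i = n} : ℝ) * f n = ∑' i : {i // w i = n}, f (w i) := by
  rw [tsum_congr fun i : {i // w i = n} ↦ congrArg f i.2, tsum_const, nsmul_eq_mul]

lemma summable_natCard_fiber_mul (hw : ∀ n, Finite {i // w i = n}) (hf : ∀ n, 0 ≤ f n) :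
    (Summable fun n ↦ (Nat.card {i // w i = n} : ℝ) * f n) ↔ Summable fun i ↦ f (w i) := by
  have hfib (n : ℕ) : Summable fun i : {i // w i = n} ↦ f (w i) :=
    have := hw n
    Summable.of_finite
  rw [← (Equiv.sigmaFiberEquiv w).summable_iff,
    summable_sigma_of_nonneg (f := (fun i ↦ f (w i)) ∘ _) fun _ ↦ hf _]
  simp_rw [natCard_fiber_mul_eq_tsum]
  exact (and_iff_right hfib).symm

lemma tsum_natCard_fiber_mul (h : Summable fun i ↦ f (w i)) :
    ∑' n, (Nat.card {i // w i = n} : ℝ) * f n = ∑' i, f (w i) := by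
  simp_rw [natCard_fiber_mul_eq_tsum]
  exact (h.hasSum.tsum_fiberwise w).tsum_eq

end FibreCount

section Radius

variable {a : ℕ → ℝ} {x : ℝ}

lemma summable_of_lt_radiusOf (ha : ∀ n, 0 ≤ a n) (hx : 0 ≤ x)
    (h : ENNReal.ofReal x < radiusOf a) : Summable fun n ↦ a n * x ^ n := by
  have hsum := (FormalMultilinearSeries.ofScalars ℝ a).summable_norm_mul_pow h
  simpa [FormalMultilinearSeries.ofScalars_norm, abs_of_nonneg (ha _), hx] using hsum

lemma le_radiusOf_of_summable (ha : ∀ n, 0 ≤ a n) (hx : 0 ≤ x)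
    (h : Summable fun n ↦ a n * x ^ n) : ENNReal.ofReal x ≤ radiusOf a := by
  refine (FormalMultilinearSeries.ofScalars ℝ a).le_radius_of_summable ?_
  simpa [FormalMultilinearSeries.ofScalars_norm, abs_of_nonneg (ha _), hx] using h

end Radius

lemma finite_multiset_card_le {ι : Type*} {F : Set ι} (hF : F.Finite) (n : ℕ) :
    {s : Multiset ι | Multiset.card s ≤ n ∧ ∀ i ∈ s, i ∈ F}.Finite := by
  classical
  refine (Set.finite_Iic (n • hF.toFinset.val)).subset fun s ⟨hcard, hs⟩ ↦
    Multiset.le_iff_count.2 fun i ↦ ?_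
  by_cases hi : i ∈ s
  · rw [Multiset.count_nsmul,
      Multiset.count_eq_one_of_mem hF.toFinset.nodup (by simpa using hs i hi), mul_one]
    exact (Multiset.count_le_card i s).trans hcard
  · exact (Multiset.count_eq_zero.2 hi).trans_le zero_le

section TsumDecomposition

lemma tsum_subtype_ne {ι : Type*} {f : ι → ℝ} (hf : Summable f) (a : ι) :
    ∑' i : {i // i ≠ a}, f i = ∑' i, f i - f a := by
  rw [← hf.tsum_subtype_add_tsum_subtype_compl {a}, tsum_singleton a f, add_sub_cancel_left]
  rfl

lemma tsum_option {ι : Type*} {f : Option ι → ℝ} (hf : Summable f) :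
    ∑' o, f o = f none + ∑' i, f (some i) := by
  have hrange : ({none}ᶜ : Set (Option ι)) = Set.range some :=
    (Set.isCompl_range_some_none ι).symm.compl_eq
  rw [← hf.tsum_subtype_add_tsum_subtype_compl {none}, tsum_singleton none f, hrange,
    tsum_range f (Option.some_injective ι)]

lemma tsum_multiset {ι : Type*} {f : Multiset ι → ℝ} (hf : Summable f) :
    ∑' s, f s = f 0 + ∑' i, f {i} + ∑' s : {s : Multiset ι | 2 ≤ Multiset.card s}, f s := by
  let g : Option ι → Multiset ι := fun o ↦ o.elim 0 singleton
  have hg : Function.Injective g := by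
    rintro (_ | i) (_ | j) h <;> simp_all [g, eq_comm]
  have hrange : {s : Multiset ι | 2 ≤ Multiset.card s} = (Set.range g)ᶜ := by
    ext s
    rw [Set.mem_ofPred_eq, Nat.two_le_iff, ne_eq, ne_eq, Multiset.card_eq_zero,
      Multiset.card_eq_one]
    simp [g, Option.exists, eq_comm]
  rw [← hf.tsum_subtype_add_tsum_subtype_compl (Set.range g), tsum_range f hg, hrange]
  exact congrArg (· + _) (tsum_option (hf.comp_injective hg))

end TsumDecomposition

/-- A combinatorial class `ι` whose structures are an atom of weight one and otherwise correspond,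
via their children, to all multisets of at least two structures except one. The excluded multiset
is `children none`; it consists of the children of the forbidden hierarchy when `ι` is the class of
hierarchies avoiding it. -/
structure AvoidingClass (ι : Type*) where
  weight : ι → ℕ
  weight_pos : ∀ i, 0 < weight i
  atom : ι
  weight_atom : weight atom = 1
  children : Option {i // i ≠ atom} → Multiset ι
  children_injective : Function.Injective children
  range_children : Set.range children = {s | 2 ≤ Multiset.card s}
  weight_eq_sum : ∀ i : {i // i ≠ atom}, weight i = ((children (some i)).map weight).sum

namespace AvoidingClass

open Finset

variable {ι : Type*} (C : AvoidingClass ι) {x y z : ℝ}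

/-- The total weight of the excluded multiset of children. -/
def excludedWeight : ℕ := ((C.children none).map C.weight).sum

/-- The generating function `∑ x ^ |i|` of the class converges at `x`. -/
def Converges (x : ℝ) : Prop := Summable fun i ↦ x ^ C.weight i

/-- The generating function `∑ x ^ |i|` of the class. -/
noncomputable def series (x : ℝ) : ℝ := ∑' i, x ^ C.weight i

/-- The exponent `∑ -log (1 - x ^ |i|)` of the generating function of multisets. -/
noncomputable def logSeries (x : ℝ) : ℝ := ∑' i, -Real.log (1 - x ^ C.weight i)

/-- The contribution of the terms of degree at least two in `x ^ |i|` to `logSeries`. -/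
noncomputable def tail (x : ℝ) : ℝ := ∑' i, logTail (x ^ C.weight i)

/-- The function `D` in the functional equation `exp u = 1 + 2 u - D` for `u = logSeries`. -/
noncomputable def forcing (x : ℝ) : ℝ := 2 * C.tail x + x - x ^ C.excludedWeight

section Weights

lemma two_le_card_children (o : Option {i // i ≠ C.atom}) :
    2 ≤ Multiset.card (C.children o) :=
  C.range_children.subset (Set.mem_range_self o)

lemma card_le_sum_weight (s : Multiset ι) : Multiset.card s ≤ (s.map C.weight).sum := by
  simpa using Multiset.card_nsmul_le_sum (s := s.map C.weight) (a := 1)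
    fun n hn ↦ by obtain ⟨i, -, rfl⟩ := Multiset.mem_map.1 hn; exact C.weight_pos i

lemma weight_lt_of_mem_children {o : Option {i // i ≠ C.atom}} {i : ι} (hi : i ∈ C.children o) :
    C.weight i < ((C.children o).map C.weight).sum := by
  obtain ⟨s, hs⟩ := Multiset.exists_cons_of_mem hi
  have hcard := C.two_le_card_children o
  have := C.card_le_sum_weight s
  rw [hs] at hcard ⊢
  simp only [Multiset.card_cons, Multiset.map_cons, Multiset.sum_cons] at hcard ⊢
  omega

lemma finite_weight_le (N : ℕ) : {i | C.weight i ≤ N}.Finite := by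
  induction N with
  | zero => exact Set.finite_empty.subset fun i hi ↦ (C.weight_pos i).not_ge hi
  | succ N ih =>
    have hfin : {i : {i // i ≠ C.atom} | C.weight i ≤ N + 1}.Finite := by
      refine ((finite_multiset_card_le ih (N + 1)).preimage
        (C.children_injective.comp (Option.some_injective _)).injOn).subset fun i hi ↦ ?_
      rw [Set.mem_ofPred_eq, C.weight_eq_sum i] at hi
      exact ⟨(C.card_le_sum_weight _).trans hi,
        fun j hj ↦ Nat.le_of_lt_succ ((C.weight_lt_of_mem_children hj).trans_le hi)⟩
    refine ((hfin.image Subtype.val).insert C.atom).subset fun i hi ↦ ?_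
    by_cases h : i = C.atom
    · exact Or.inl h
    · exact Or.inr ⟨⟨i, h⟩, hi, rfl⟩

lemma finite_weight_eq (n : ℕ) : Finite {i // C.weight i = n} :=
  ((C.finite_weight_le n).subset fun _ hi ↦ le_of_eq hi).to_subtype

/-- The finite set of structures of weight at most `N`. -/
noncomputable def upTo (N : ℕ) : Finset ι := (C.finite_weight_le N).toFinset

@[simp] lemma mem_upTo {N : ℕ} {i : ι} : i ∈ C.upTo N ↔ C.weight i ≤ N := by simp [upTo]

end Weights

section FunctionalEquation

lemma pow_weight_nonneg (hx : 0 ≤ x) (i : ι) : 0 ≤ x ^ C.weight i := pow_nonneg hx _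

lemma pow_weight_lt_one (hx : 0 ≤ x) (hx1 : x < 1) (i : ι) : x ^ C.weight i < 1 :=
  pow_lt_one₀ hx hx1 (C.weight_pos i).ne'

lemma neg_log_nonneg (hx : 0 ≤ x) (hx1 : x < 1) (i : ι) : 0 ≤ -Real.log (1 - x ^ C.weight i) := by
  have := logTail_nonneg (C.pow_weight_lt_one hx hx1 i)
  linarith [add_logTail (x ^ C.weight i), C.pow_weight_nonneg hx i]

variable {C}

lemma Converges.mono (h : C.Converges z) (hx : 0 ≤ x) (hxz : x ≤ z) : C.Converges x :=
  Summable.of_nonneg_of_le (C.pow_weight_nonneg hx) (fun _ ↦ pow_le_pow_left₀ hx hxz _) h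

lemma Converges.sq (h : C.Converges x) (hx : 0 ≤ x) (hx1 : x < 1) : C.Converges (x ^ 2) :=
  h.mono (sq_nonneg x) (pow_le_of_le_one hx hx1.le two_ne_zero)

lemma Converges.summable_logTail (h : C.Converges (x ^ 2)) (hx : 0 ≤ x) (hx1 : x < 1) :
    Summable fun i ↦ logTail (x ^ C.weight i) :=
  Summable.of_nonneg_of_le (fun i ↦ logTail_nonneg (C.pow_weight_lt_one hx hx1 i))
    (fun i ↦ logTail_pow_le hx hx1 (C.weight_pos i).ne') (h.div_const (1 - x))

lemma Converges.series_add_tail (h : C.Converges x) (hx : 0 ≤ x) (hx1 : x < 1) :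
    C.series x + C.tail x = C.logSeries x := by
  rw [series, tail, logSeries, ← h.tsum_add ((h.sq hx hx1).summable_logTail hx hx1)]
  simp_rw [add_logTail]

variable (C)

lemma prod_pow_weight (x : ℝ) (s : Multiset ι) :
    (s.map fun i ↦ x ^ C.weight i).prod = x ^ (s.map C.weight).sum := by
  induction s using Multiset.induction with
  | empty => simp
  | cons i s ih => simp [ih, pow_add]

lemma summable_prod_children {t : ι → ℝ} (h0 : ∀ i, 0 ≤ t i) (h1 : ∀ i, t i < 1)
    (ht : Summable t) : Summable fun o ↦ ((C.children o).map t).prod :=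
  (hasSum_multiset_prod h0 h1 ht).summable.comp_injective C.children_injective

lemma exp_tsum_neg_log {t : ι → ℝ} (h0 : ∀ i, 0 ≤ t i) (h1 : ∀ i, t i < 1) (ht : Summable t) :
    Real.exp (∑' i, -Real.log (1 - t i)) = 1 + ∑' i, t i + (((C.children none).map t).prod +
      ∑' i : {i // i ≠ C.atom}, ((C.children (some i)).map t).prod) := by
  have h := hasSum_multiset_prod h0 h1 ht
  rw [← h.tsum_eq, tsum_multiset h.summable, ← C.range_children,
    tsum_range (fun s ↦ (s.map t).prod) C.children_injective,
    tsum_option (C.summable_prod_children h0 h1 ht)]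
  simp

variable {C}

lemma Converges.exp_logSeries (h : C.Converges x) (hx : 0 ≤ x) (hx1 : x < 1) :
    Real.exp (C.logSeries x) = 1 + 2 * C.series x - x + x ^ C.excludedWeight := by
  rw [logSeries, C.exp_tsum_neg_log (C.pow_weight_nonneg hx) (C.pow_weight_lt_one hx hx1) h]
  simp_rw [prod_pow_weight, ← C.weight_eq_sum]
  rw [tsum_subtype_ne h, C.weight_atom, pow_one, series, excludedWeight]
  ring

lemma Converges.exp_logSeries_eq_sub_forcing (h : C.Converges x) (hx : 0 ≤ x) (hx1 : x < 1) :
    Real.exp (C.logSeries x) = 1 + 2 * C.logSeries x - C.forcing x := by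
  rw [h.exp_logSeries hx hx1, ← h.series_add_tail hx hx1, forcing]
  ring

end FunctionalEquation

section Truncation

/-- The generating function of the structures of weight at most `N`. -/
noncomputable def partialSeries (N : ℕ) (x : ℝ) : ℝ := ∑ i ∈ C.upTo N, x ^ C.weight i

/-- The truncation of `i ↦ x ^ |i|` to the structures of weight at most `N`. -/
noncomputable def truncPow (N : ℕ) (x : ℝ) (i : ι) : ℝ :=
  if C.weight i ≤ N then x ^ C.weight i else 0

lemma partialSeries_mono (hx : 0 ≤ x) : Monotone fun N ↦ C.partialSeries N x :=
  fun _ _ h ↦ sum_le_sum_of_subset_of_nonneg (fun i hi ↦ by simp only [mem_upTo] at *; omega)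
    fun i _ _ ↦ C.pow_weight_nonneg hx i

lemma partialSeries_nonneg (hx : 0 ≤ x) (N : ℕ) : 0 ≤ C.partialSeries N x :=
  sum_nonneg fun i _ ↦ C.pow_weight_nonneg hx i

lemma partialSeries_zero (x : ℝ) : C.partialSeries 0 x = 0 :=
  sum_eq_zero fun i hi ↦ absurd (C.mem_upTo.1 hi) (C.weight_pos i).not_ge

lemma continuous_partialSeries (N : ℕ) : Continuous (C.partialSeries N) := by
  unfold partialSeries; fun_prop

lemma converges_of_partialSeries_le (hx : 0 ≤ x) (h : ∀ N, C.partialSeries N x ≤ y) :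
    C.Converges x := by
  refine summable_of_sum_le (c := y) (C.pow_weight_nonneg hx) fun E ↦ ?_
  have hE : E ⊆ C.upTo (E.sup C.weight) := fun i hi ↦ C.mem_upTo.2 (le_sup hi)
  exact (sum_le_sum_of_subset_of_nonneg hE fun i _ _ ↦ C.pow_weight_nonneg hx i).trans (h _)

lemma truncPow_of_le {N : ℕ} {i : ι} (hi : C.weight i ≤ N) :
    C.truncPow N x i = x ^ C.weight i := if_pos hi

lemma truncPow_nonneg (hx : 0 ≤ x) (N : ℕ) (i : ι) : 0 ≤ C.truncPow N x i := by
  unfold truncPow; split_ifs <;> positivity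

lemma truncPow_lt_one (hx : 0 ≤ x) (hx1 : x < 1) (N : ℕ) (i : ι) : C.truncPow N x i < 1 := by
  unfold truncPow; split_ifs
  exacts [C.pow_weight_lt_one hx hx1 i, one_pos]

lemma truncPow_eq_zero {N : ℕ} {i : ι} (hi : i ∉ C.upTo N) : C.truncPow N x i = 0 :=
  if_neg (mt C.mem_upTo.2 hi)

lemma tsum_comp_truncPow {f : ℝ → ℝ} (hf : f 0 = 0) (N : ℕ) (x : ℝ) :
    ∑' i, f (C.truncPow N x i) = ∑ i ∈ C.upTo N, f (x ^ C.weight i) := by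
  rw [tsum_eq_sum (s := C.upTo N) fun i hi ↦ by rw [C.truncPow_eq_zero hi, hf]]
  exact sum_congr rfl fun i hi ↦ by rw [C.truncPow_of_le (C.mem_upTo.1 hi)]

lemma summable_truncPow (N : ℕ) (x : ℝ) : Summable (C.truncPow N x) :=
  summable_of_ne_finset_zero (s := C.upTo N) fun _ ↦ C.truncPow_eq_zero

lemma prod_truncPow_children {N : ℕ} {o : Option {i // i ≠ C.atom}}
    (ho : ((C.children o).map C.weight).sum ≤ N + 1) :
    ((C.children o).map (C.truncPow N x)).prod = x ^ ((C.children o).map C.weight).sum := by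
  rw [← C.prod_pow_weight]
  exact congrArg _ (Multiset.map_congr rfl fun i hi ↦ C.truncPow_of_le
    (Nat.le_of_lt_succ ((C.weight_lt_of_mem_children hi).trans_le ho)))

lemma partialSeries_succ_le (hx : 0 ≤ x) (hx1 : x < 1) (N : ℕ) :
    C.partialSeries (N + 1) x ≤ x + ∑' i : {i // i ≠ C.atom},
      ((C.children (some i)).map (C.truncPow N x)).prod := by
  classical
  have hatom : C.atom ∈ C.upTo (N + 1) := by simp [C.weight_atom]
  have hsum : Summable fun i : {i // i ≠ C.atom} ↦
      ((C.children (some i)).map (C.truncPow N x)).prod :=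
    (C.summable_prod_children (C.truncPow_nonneg hx N) (C.truncPow_lt_one hx hx1 N)
      (C.summable_truncPow N x)).comp_injective (Option.some_injective _)
  calc C.partialSeries (N + 1) x
      = x + ∑ i ∈ (C.upTo (N + 1)).subtype (· ≠ C.atom), x ^ C.weight i := by
        rw [partialSeries, sum_subtype_eq_sum_filter fun i ↦ x ^ C.weight i, filter_ne',
          ← add_sum_erase _ _ hatom, C.weight_atom, pow_one]
    _ = x + ∑ i ∈ (C.upTo (N + 1)).subtype (· ≠ C.atom),
          ((C.children (some i)).map (C.truncPow N x)).prod := by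
        congr 1
        refine sum_congr rfl fun i hi ↦ ?_
        rw [mem_subtype, mem_upTo, C.weight_eq_sum] at hi
        rw [C.prod_truncPow_children hi, ← C.weight_eq_sum]
    _ ≤ _ := by
        gcongr
        refine hsum.sum_le_tsum _ fun i _ ↦ Multiset.prod_nonneg ?_
        simp +contextual [C.truncPow_nonneg hx]

lemma partialSeries_succ_add_le (hx : 0 ≤ x) (hx1 : x < 1) (N : ℕ) :
    C.partialSeries (N + 1) x + (1 + C.partialSeries N x +
      ((C.children none).map (C.truncPow N x)).prod) ≤
        x + Real.exp (∑ i ∈ C.upTo N, -Real.log (1 - x ^ C.weight i)) := by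
  have htsum : ∑' i, C.truncPow N x i = C.partialSeries N x :=
    C.tsum_comp_truncPow (f := id) rfl N x
  have h := C.exp_tsum_neg_log (C.truncPow_nonneg hx N) (C.truncPow_lt_one hx hx1 N)
    (C.summable_truncPow N x)
  rw [C.tsum_comp_truncPow (f := fun t ↦ -Real.log (1 - t)) (by simp), htsum] at h
  linarith [C.partialSeries_succ_le hx hx1 N]

/- The children of a structure of weight at most `N + 1` have weight at most `N`. Hence the
functional equation bounds `partialSeries (N + 1)` in terms of the structures of weight at most `N`,
and the bound `y` propagates. -/
lemma converges_of_exp_le (hx : 0 ≤ x) (hx1 : x < 1) {N₀ : ℕ} (h₀ : C.partialSeries N₀ x ≤ y)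
    (h : ∀ N ≥ N₀, C.partialSeries N x ≤ y →
      Real.exp (∑ i ∈ C.upTo N, -Real.log (1 - x ^ C.weight i)) ≤
        1 + C.partialSeries N x + ((C.children none).map (C.truncPow N x)).prod + y - x) :
    C.Converges x := by
  have hbound : ∀ N ≥ N₀, C.partialSeries N x ≤ y := fun N hN ↦ by
    induction N, hN using Nat.le_induction with
    | base => exact h₀
    | succ N hN ih => linarith [h N hN ih, C.partialSeries_succ_add_le hx hx1 N]
  exact C.converges_of_partialSeries_le hx fun N ↦
    (C.partialSeries_mono hx (le_max_right N₀ N)).trans (hbound _ (le_max_left N₀ N))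

end Truncation

section Radius

lemma converges_one_tenth : C.Converges (1 / 10) := by
  refine C.converges_of_exp_le (N₀ := 0) (y := 1 / 4) (by norm_num) (by norm_num)
    (by norm_num [C.partialSeries_zero]) fun N _ hN ↦ ?_
  have h0 := C.partialSeries_nonneg (x := 1 / 10) (by norm_num) N
  have hprod : 0 ≤ ((C.children none).map (C.truncPow N (1 / 10))).prod :=
    Multiset.prod_nonneg (by simp +contextual [C.truncPow_nonneg])
  have hlog : ∑ i ∈ C.upTo N, -Real.log (1 - (1 / 10) ^ C.weight i) ≤
      10 / 9 * C.partialSeries N (1 / 10) := by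
    rw [partialSeries, mul_sum]
    refine sum_le_sum fun i _ ↦ ?_
    have hpos := C.pow_weight_nonneg (x := 1 / 10) (by norm_num) i
    have hle : (1 / 10 : ℝ) ^ C.weight i ≤ 1 / 10 :=
      pow_le_of_le_one (by norm_num) (by norm_num) (C.weight_pos i).ne'
    refine (neg_log_one_sub_le (by linarith)).trans ?_
    rw [div_le_iff₀ (by linarith)]
    nlinarith
  set h := C.partialSeries N (1 / 10)
  have hexp := (abs_le.1 (Real.abs_exp_sub_one_sub_id_le (x := 10 / 9 * h)
    (by rw [abs_of_nonneg (by positivity)]; linarith))).2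
  have := Real.exp_le_exp.2 hlog
  nlinarith

lemma converges_of_forcing_le (hx : 0 ≤ x) (hx1 : x < 1) (hsq : C.Converges (x ^ 2))
    (hforcing : C.forcing x ≤ 2 * Real.log 2 - 1)
    (hpartial : C.partialSeries C.excludedWeight x + C.tail x ≤ Real.log 2) : C.Converges x := by
  refine C.converges_of_exp_le hx hx1 (N₀ := C.excludedWeight) (y := Real.log 2 - C.tail x)
    (by linarith) fun N hN hNy ↦ ?_
  have htail := hsq.summable_logTail hx hx1
  have hnonneg (i : ι) : 0 ≤ logTail (x ^ C.weight i) :=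
    logTail_nonneg (C.pow_weight_lt_one hx hx1 i)
  have hlog : ∑ i ∈ C.upTo N, -Real.log (1 - x ^ C.weight i) ≤ C.partialSeries N x + C.tail x := by
    simp_rw [← add_logTail]
    rw [sum_add_distrib]
    exact add_le_add le_rfl (htail.sum_le_tsum _ fun i _ ↦ hnonneg i)
  have hexcluded := C.prod_truncPow_children (x := x) (o := none) (hN.le.trans N.le_succ)
  have htail_nonneg : 0 ≤ C.tail x := tsum_nonneg hnonneg
  have hmono := exp_sub_self_mono (add_nonneg (C.partialSeries_nonneg hx N) htail_nonneg)
    (show C.partialSeries N x + C.tail x ≤ Real.log 2 by linarith)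
  rw [Real.exp_log two_pos] at hmono
  have := Real.exp_le_exp.2 hlog
  rw [hexcluded]
  unfold forcing excludedWeight at *
  linarith

variable {C}

lemma Converges.forcing_lt (hz : C.Converges z) (hx : 0 ≤ x) (hxz : x < z) (hz1 : z < 1) :
    C.forcing x < C.forcing z := by
  have hx1 := hxz.trans hz1
  have hz0 := hx.trans hxz.le
  have htail {y : ℝ} (hy : Summable fun i ↦ logTail (y ^ C.weight i)) :
      C.tail y = logTail y + ∑' i : {i // i ≠ C.atom}, logTail (y ^ C.weight i) := by
    rw [tsum_subtype_ne hy, C.weight_atom, pow_one, tail]; ring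
  have hsx := ((hz.mono hx hxz.le).sq hx hx1).summable_logTail hx hx1
  have hsz := (hz.sq hz0 hz1).summable_logTail hz0 hz1
  have hle : ∑' i : {i // i ≠ C.atom}, logTail (x ^ C.weight i) ≤
      ∑' i : {i // i ≠ C.atom}, logTail (z ^ C.weight i) :=
    (hsx.subtype _).tsum_le_tsum (fun i ↦ logTail_mono (C.pow_weight_nonneg hx i)
      (pow_le_pow_left₀ hx hxz.le _) (C.pow_weight_lt_one hz0 hz1 i)) (hsz.subtype _)
  rw [forcing, forcing, htail hsx, htail hsz]
  linarith [two_mul_logTail_add_sub_pow_strictMono hx hxz hz1 C.excludedWeight]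

lemma Converges.logSeries_le (hz : C.Converges z) (hx : 0 ≤ x) (hxz : x ≤ z) (hz1 : z < 1) :
    C.logSeries x ≤ C.logSeries z := by
  refine (summable_neg_log_one_sub (hz.mono hx hxz)).tsum_le_tsum (fun i ↦ neg_le_neg ?_)
    (summable_neg_log_one_sub hz)
  have := C.pow_weight_lt_one (hx.trans hxz) hz1 i
  gcongr

lemma Converges.exp_logSeries_lt_two (hz : C.Converges z) (hx : 0 ≤ x) (hxz : x < z)
    (hz1 : z < 1) : Real.exp (C.logSeries x) < 2 := by
  by_contra! h2
  -- `exp u - 2 u` would not decrease from `x` to `z`, as `u` stays in `[log 2, ∞)`.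
  have hu := hz.logSeries_le hx hxz.le hz1
  have hex := (hz.mono hx hxz.le).exp_logSeries_eq_sub_forcing hx (hxz.trans hz1)
  have hez := hz.exp_logSeries_eq_sub_forcing (hx.trans hxz.le) hz1
  have hforcing := hz.forcing_lt hx hxz hz1
  have hconv := Real.add_one_le_exp (C.logSeries z - C.logSeries x)
  rw [Real.exp_sub, le_div_iff₀ (Real.exp_pos _)] at hconv
  nlinarith

lemma Converges.le_half (hz : C.Converges z) : z ≤ 1 / 2 := by
  by_contra! h
  have hz' : C.Converges (min z (3 / 4)) := hz.mono (by positivity) (min_le_left _ _)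
  have hlt : 1 / 2 < min z (3 / 4) := lt_min h (by norm_num)
  have hlog := hz'.exp_logSeries_lt_two (by norm_num) hlt (min_lt_of_right_lt (by norm_num))
  have hatom := (summable_neg_log_one_sub (hz'.mono (by norm_num) hlt.le)).le_tsum C.atom
    fun i _ ↦ C.neg_log_nonneg (by norm_num) (by norm_num) i
  rw [C.weight_atom] at hatom
  have h2 : Real.exp (-Real.log (1 - (1 / 2) ^ 1)) = 2 := by
    rw [← Real.log_inv, Real.exp_log] <;> norm_num
  have := Real.exp_le_exp.2 hatom
  rw [h2] at this
  exact absurd hlog this.not_gt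

lemma Converges.continuousOn_tail {s : ℝ} (hs : C.Converges (s ^ 2)) (hs1 : s < 1) :
    ContinuousOn C.tail (Set.Icc 0 s) := by
  refine continuousOn_tsum (u := fun i ↦ (s ^ 2) ^ C.weight i / (1 - s)) (fun i ↦ ?_)
    (hs.div_const _) fun i x ⟨hx, hxs⟩ ↦ ?_
  · unfold logTail
    refine ContinuousOn.sub (ContinuousOn.neg (ContinuousOn.log (by fun_prop) fun x hx ↦ ?_))
      (by fun_prop)
    exact (sub_pos.2 (C.pow_weight_lt_one hx.1 (hx.2.trans_lt hs1) i)).ne'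
  · have hx1 := hxs.trans_lt hs1
    have := sub_pos.2 hs1
    rw [Real.norm_of_nonneg (logTail_nonneg (C.pow_weight_lt_one hx hx1 i))]
    refine (logTail_pow_le hx hx1 (C.weight_pos i).ne').trans ?_
    gcongr

end Radius

section ValueAtRadius

variable {C} {ρ : ℝ}

lemma le_half_of_forall_converges (hconv : ∀ x, 0 ≤ x → x < ρ → C.Converges x) : ρ ≤ 1 / 2 := by
  by_contra! h
  obtain ⟨x, hx, hxρ⟩ := exists_between h
  exact hx.not_ge (hconv x (by linarith) hxρ).le_half

lemma sum_neg_log_le_log_two (hρ : 0 < ρ) (hconv : ∀ x, 0 ≤ x → x < ρ → C.Converges x)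
    (E : Finset ι) : ∑ i ∈ E, -Real.log (1 - ρ ^ C.weight i) ≤ Real.log 2 := by
  have hρ1 : ρ < 1 := (le_half_of_forall_converges hconv).trans_lt (by norm_num)
  have hcont : ContinuousAt (fun x ↦ ∑ i ∈ E, -Real.log (1 - x ^ C.weight i)) ρ := by
    refine tendsto_finsetSum _ fun i _ ↦ ContinuousAt.neg (ContinuousAt.log (by fun_prop) ?_)
    exact (sub_pos.2 (C.pow_weight_lt_one hρ.le hρ1 i)).ne'
  refine le_of_tendsto (hcont.tendsto.mono_left (nhdsWithin_le_nhds (s := Set.Iio ρ))) ?_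
  filter_upwards [Ioo_mem_nhdsLT hρ] with x ⟨hx, hxρ⟩
  obtain ⟨z, hxz, hzρ⟩ := exists_between hxρ
  have hz := hconv z (hx.trans hxz).le hzρ
  have hx1 := hxρ.trans hρ1
  calc ∑ i ∈ E, -Real.log (1 - x ^ C.weight i) ≤ C.logSeries x :=
        (summable_neg_log_one_sub (hz.mono hx.le hxz.le)).sum_le_tsum E
          fun i _ ↦ C.neg_log_nonneg hx.le hx1 i
    _ ≤ Real.log 2 := (Real.le_log_iff_exp_le two_pos).2
          (hz.exp_logSeries_lt_two hx.le hxz (hzρ.trans hρ1)).le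

lemma converges_at_radius (hρ : 0 < ρ) (hconv : ∀ x, 0 ≤ x → x < ρ → C.Converges x) :
    C.Converges ρ := by
  have hρ1 : ρ < 1 := (le_half_of_forall_converges hconv).trans_lt (by norm_num)
  refine Summable.of_nonneg_of_le (C.pow_weight_nonneg hρ.le) (fun i ↦ ?_) <|
    summable_of_sum_le (C.neg_log_nonneg hρ.le hρ1) (sum_neg_log_le_log_two hρ hconv)
  linarith [add_logTail (ρ ^ C.weight i), logTail_nonneg (C.pow_weight_lt_one hρ.le hρ1 i)]

lemma Converges.exists_gt_of_logSeries_lt (h : C.Converges ρ) (hρ : 0 < ρ)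
    (hlog : C.logSeries ρ < Real.log 2) : ∃ x > ρ, C.Converges x := by
  have hρ1 : ρ < 1 := h.le_half.trans_lt (by norm_num)
  have hsqrt1 : √ρ < 1 := (Real.sqrt_lt' one_pos).2 (by rwa [one_pow])
  have hρsqrt : ρ < √ρ := Real.lt_sqrt_of_sq_lt (by nlinarith)
  have htail : ContinuousAt C.tail ρ :=
    (Converges.continuousOn_tail (by rwa [Real.sq_sqrt hρ.le]) hsqrt1).continuousAt
      (Icc_mem_nhds hρ hρsqrt)
  have hforcing : C.forcing ρ < 2 * Real.log 2 - 1 := by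
    linarith [h.exp_logSeries_eq_sub_forcing hρ.le hρ1, exp_sub_two_mul_gt hlog.ne]
  have hpartial : C.partialSeries C.excludedWeight ρ + C.tail ρ < Real.log 2 := by
    refine lt_of_le_of_lt ?_ hlog
    rw [← h.series_add_tail hρ.le hρ1]
    exact add_le_add_left (h.sum_le_tsum _ fun i _ ↦ C.pow_weight_nonneg hρ.le i) _
  have hcont : ContinuousAt C.forcing ρ := by unfold forcing; fun_prop
  have hcont' : ContinuousAt (fun x ↦ C.partialSeries C.excludedWeight x + C.tail x) ρ :=
    (C.continuous_partialSeries _).continuousAt.add htail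
  have hgood : ∀ᶠ x in nhdsWithin ρ (Set.Ioi ρ), ρ < x ∧ x < √ρ ∧
      C.forcing x < 2 * Real.log 2 - 1 ∧
        C.partialSeries C.excludedWeight x + C.tail x < Real.log 2 := by
    filter_upwards [self_mem_nhdsWithin, nhdsWithin_le_nhds (Iio_mem_nhds hρsqrt),
      nhdsWithin_le_nhds (hcont.eventually_lt_const hforcing),
      nhdsWithin_le_nhds (hcont'.eventually_lt_const hpartial)] with x h1 h2 h3 h4
    exact ⟨h1, h2, h3, h4⟩
  obtain ⟨x, hρx, hxs, hfx, hpx⟩ := hgood.exists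
  have hx := hρ.le.trans hρx.le
  exact ⟨x, hρx, C.converges_of_forcing_le hx (hxs.trans hsqrt1)
    (h.mono (sq_nonneg x) ((Real.le_sqrt hx hρ.le).1 hxs.le)) hfx.le hpx.le⟩

theorem series_at_radius (hρ : 0 < ρ) (hconv : ∀ x, 0 ≤ x → x < ρ → C.Converges x)
    (hle : ∀ x, 0 ≤ x → C.Converges x → x ≤ ρ) :
    C.series ρ = (1 + ρ - ρ ^ C.excludedWeight) / 2 := by
  have hC := converges_at_radius hρ hconv
  have hρ1 : ρ < 1 := hC.le_half.trans_lt (by norm_num)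
  have hlog : C.logSeries ρ = Real.log 2 := by
    refine le_antisymm ((summable_neg_log_one_sub hC).tsum_le_of_sum_le
      (sum_neg_log_le_log_two hρ hconv)) (le_of_not_gt fun hlt ↦ ?_)
    obtain ⟨x, hρx, hx⟩ := hC.exists_gt_of_logSeries_lt hρ hlt
    exact hρx.not_ge (hle x (hρ.trans hρx).le hx)
  have h := hC.exp_logSeries hρ.le hρ1
  rw [hlog, Real.exp_log two_pos] at h
  linarith

end ValueAtRadius

/-- The number of structures of weight `n`. -/
noncomputable def count (n : ℕ) : ℕ := Nat.card {i // C.weight i = n}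

lemma summable_count_iff (hx : 0 ≤ x) :
    (Summable fun n ↦ (C.count n : ℝ) * x ^ n) ↔ C.Converges x :=
  summable_natCard_fiber_mul C.finite_weight_eq fun n ↦ pow_nonneg hx n

lemma converges_of_lt_radiusOf_count (hx : 0 ≤ x)
    (h : ENNReal.ofReal x < radiusOf fun n ↦ (C.count n : ℝ)) : C.Converges x :=
  (C.summable_count_iff hx).1 (summable_of_lt_radiusOf (fun _ ↦ Nat.cast_nonneg _) hx h)

variable {C} in
lemma Converges.le_radiusOf_count (h : C.Converges x) (hx : 0 ≤ x) :
    ENNReal.ofReal x ≤ radiusOf fun n ↦ (C.count n : ℝ) :=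
  le_radiusOf_of_summable (fun _ ↦ Nat.cast_nonneg _) hx ((C.summable_count_iff hx).2 h)

lemma radiusOf_count_ne_top : (radiusOf fun n ↦ (C.count n : ℝ)) ≠ ⊤ := fun htop ↦ by
  have := (C.converges_of_lt_radiusOf_count zero_le_one (htop ▸ ENNReal.ofReal_lt_top)).le_half
  norm_num at this

theorem tsum_count_at_radius {ρ : ℝ} (hρ : ρ = (radiusOf fun n ↦ (C.count n : ℝ)).toReal) :
    ∑' n, (C.count n : ℝ) * ρ ^ n = (1 + ρ - ρ ^ C.excludedWeight) / 2 := by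
  have hle (x : ℝ) (hx : 0 ≤ x) (h : C.Converges x) : x ≤ ρ :=
    hρ ▸ (ENNReal.ofReal_le_iff_le_toReal C.radiusOf_count_ne_top).1 (h.le_radiusOf_count hx)
  have hconv (x : ℝ) (hx : 0 ≤ x) (hxρ : x < ρ) : C.Converges x :=
    C.converges_of_lt_radiusOf_count hx
      ((ENNReal.ofReal_lt_iff_lt_toReal hx C.radiusOf_count_ne_top).2 (hρ ▸ hxρ))
  have hpos : 0 < ρ := lt_of_lt_of_le (by norm_num) (hle _ (by norm_num) C.converges_one_tenth)
  rw [← series_at_radius hpos hconv hle]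
  exact tsum_natCard_fiber_mul (converges_at_radius hpos hconv)

end AvoidingClass

lemma forall₂_comp {α β γ : Type*} {R : α → β → Prop} {R' : β → γ → Prop} {l₁ : List α}
    {l₂ : List β} {l₃ : List γ} (h : List.Forall₂ R l₁ l₂) (h' : List.Forall₂ R' l₂ l₃) :
    List.Forall₂ (Relation.Comp R R') l₁ l₃ := by
  induction h generalizing l₃ with
  | nil => cases h'; exact .nil
  | cons hab _ ih =>
    cases h' with
    | cons hbc htail => exact .cons ⟨_, hab, hbc⟩ (ih htail)

namespace RTree

section Iso

variable {t u v : RTree} {l₁ l₂ : List RTree}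

theorem induction {P : RTree → Prop} (node : ∀ l, (∀ t ∈ l, P t) → P (.node l)) : ∀ t, P t
  | .node l => node l fun t _ ↦ induction node t
decreasing_by
  have := List.sizeOf_lt_of_mem ‹t ∈ l›
  simp only [RTree.node.sizeOf_spec]
  omega

theorem Iso.induction {P : RTree → RTree → Prop}
    (node : ∀ {l₁ l l₂}, List.Forall₂ (fun a b ↦ Iso a b ∧ P a b) l₁ l → l.Perm l₂ →
      P (.node l₁) (.node l₂)) (h : Iso t u) : P t u :=
  Iso.rec (motive_1 := fun t u _ ↦ P t u)
    (motive_2 := fun l₁ l _ ↦ List.Forall₂ (fun a b ↦ Iso a b ∧ P a b) l₁ l)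
    (fun _ h₂ ih ↦ node ih h₂) .nil (fun h _ ih ihs ↦ .cons ⟨h, ih⟩ ihs) h

lemma iso_node : Iso (.node l₁) (.node l₂) ↔ ∃ l, List.Forall₂ Iso l₁ l ∧ l.Perm l₂ :=
  ⟨fun | .node h₁ h₂ => ⟨_, h₁, h₂⟩, fun ⟨_, h₁, h₂⟩ ↦ .node h₁ h₂⟩

@[refl] lemma Iso.refl (t : RTree) : Iso t t :=
  RTree.induction (P := fun t ↦ Iso t t) (fun l ih ↦ .node (List.forall₂_same.2 ih) (.refl l)) t

@[symm] lemma Iso.symm (h : Iso t u) : Iso u t := by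
  refine h.induction (P := fun t u ↦ Iso u t) fun h₁ h₂ ↦ ?_
  obtain ⟨k, hk₁, hk₂⟩ := List.perm_comp_forall₂ h₂.symm (h₁.imp fun _ _ h ↦ h.2).flip
  exact .node hk₁ hk₂

@[trans] lemma Iso.trans (h : Iso t u) (h' : Iso u v) : Iso t v := by
  refine h.induction (P := fun t u ↦ ∀ v, Iso u v → Iso t v) ?_ v h'
  rintro l₁ l l₂ h₁ h₂ _ (@⟨_, l', l₃, h₁', h₂'⟩)
  obtain ⟨k, hk₁, hk₂⟩ := List.perm_comp_forall₂ h₂ h₁'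
  exact .node ((forall₂_comp h₁ hk₁).imp fun _ _ ⟨_, hab, hbc⟩ ↦ hab.2 _ hbc) (hk₂.trans h₂')

instance isoSetoid : Setoid RTree := ⟨Iso, Iso.refl, Iso.symm, Iso.trans⟩

end Iso

section Classes

/-- Isomorphism classes of rooted unordered trees. -/
def IsoClass : Type := Quotient isoSetoid

namespace IsoClass

/-- The isomorphism class of a tree. -/
def mk (t : RTree) : IsoClass := Quotient.mk isoSetoid t

variable {t u : RTree} {l₁ l₂ : List RTree}

lemma mk_eq_mk : mk t = mk u ↔ Iso t u := Quotient.eq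

lemma mk_surjective : Function.Surjective mk := Quotient.exists_rep

lemma forall₂_iso_iff : List.Forall₂ Iso l₁ l₂ ↔ l₁.map mk = l₂.map mk := by
  simp only [← List.forall₂_eq_eq_eq, List.forall₂_map_left_iff, List.forall₂_map_right_iff,
    mk_eq_mk]

lemma mk_node_eq_mk_node :
    mk (.node l₁) = mk (.node l₂) ↔ (l₁.map mk : Multiset IsoClass) = l₂.map mk := by
  have hcomp : Relation.Comp (· = List.map mk ·) List.Perm (l₁.map mk) l₂ ↔
      (l₁.map mk).Perm (l₂.map mk) := by rw [List.eq_map_comp_perm]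
  rw [mk_eq_mk, iso_node, Multiset.coe_eq_coe, ← hcomp]
  simp only [forall₂_iso_iff, Relation.Comp]

/-- The multiset of the classes of the subtrees hanging from the root. -/
def children : IsoClass → Multiset IsoClass :=
  Quotient.lift (fun | .node l => (l.map mk : Multiset IsoClass)) <| by
    rintro ⟨l₁⟩ ⟨l₂⟩ h
    exact mk_node_eq_mk_node.1 (mk_eq_mk.2 h)

@[simp] lemma children_mk_node (l : List RTree) :
    (mk (.node l)).children = (l.map mk : Multiset IsoClass) := rfl

lemma children_bijective : Function.Bijective children := by
  refine ⟨fun c d h ↦ ?_, fun s ↦ ?_⟩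
  · obtain ⟨⟨l₁⟩, rfl⟩ := mk_surjective c
    obtain ⟨⟨l₂⟩, rfl⟩ := mk_surjective d
    exact mk_node_eq_mk_node.2 h
  · induction s using Quotient.inductionOn with | h s =>
    obtain ⟨l, rfl⟩ := List.map_surjective_iff.2 mk_surjective s
    exact ⟨mk (.node l), rfl⟩

end IsoClass

lemma Iso.eq_of_recursive {α : Type*} {f : RTree → α} {t u : RTree}
    (F : IsoClass → Multiset α → α)
    (hf : ∀ l, f (.node l) = F (.mk (.node l)) (l.map f : Multiset α)) (h : Iso t u) :
    f t = f u := by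
  refine h.induction (P := fun t u ↦ f t = f u) fun {l₁ l l₂} h₁ h₂ ↦ ?_
  have hclass : IsoClass.mk (.node l₁) = .mk (.node l₂) :=
    IsoClass.mk_eq_mk.2 (.node (h₁.imp fun _ _ h ↦ h.1) h₂)
  have hmap : l₁.map f = l.map f := by
    rw [← List.forall₂_eq_eq_eq, List.forall₂_map_left_iff, List.forall₂_map_right_iff]
    exact h₁.imp fun _ _ h ↦ h.2
  rw [hf, hf, hclass, hmap, Multiset.coe_eq_coe.2 (h₂.map f)]

end Classes

section Leaves

variable {S s t u : RTree} {l : List RTree} {c : IsoClass}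

lemma leaves_node (l : List RTree) :
    (RTree.node l).leaves = if l = [] then 1 else (l.map leaves).sum := by
  cases l with
  | nil => rw [leaves, if_pos rfl]
  | cons a l =>
    rw [leaves, if_neg (List.cons_ne_nil a l)]
    exact congrArg List.sum (List.attach_map_val (f := leaves))

lemma leaves_pos (t : RTree) : 0 < t.leaves := by
  refine RTree.induction (P := fun t ↦ 0 < t.leaves) (fun l ih ↦ ?_) t
  rw [leaves_node]
  split_ifs with h
  · exact one_pos
  · obtain ⟨a, ha⟩ := List.exists_mem_of_ne_nil l h
    exact (ih a ha).trans_le (List.single_le_sum (by simp) _ (List.mem_map_of_mem ha))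

lemma Iso.leaves_eq (h : Iso t u) : t.leaves = u.leaves := by
  classical
  exact h.eq_of_recursive (fun _ s ↦ if s = 0 then 1 else s.sum) fun l ↦ by
    simp [leaves_node]

lemma SubtreeOf.leaves_le (h : s.SubtreeOf t) : s.leaves ≤ t.leaves := by
  induction h with
  | refl => exact le_rfl
  | @child _ l ht _ ih =>
    rw [leaves_node, if_neg (List.ne_nil_of_mem ht)]
    exact ih.trans (List.single_le_sum (by simp) _ (List.mem_map_of_mem ht))

lemma leaves_lt_of_mem (ht : t ∈ l) (hl : l.length ≠ 1) : t.leaves < (RTree.node l).leaves := by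
  classical
  have hperm := List.perm_cons_erase ht
  obtain ⟨a, ha⟩ : ∃ a, a ∈ l.erase t := List.exists_mem_of_ne_nil _ fun h ↦
    hl (by rw [hperm.length_eq, h, List.length_singleton])
  rw [leaves_node, if_neg (List.ne_nil_of_mem ht), (hperm.map leaves).sum_eq, List.map_cons,
    List.sum_cons]
  exact Nat.lt_add_of_pos_right <|
    (leaves_pos a).trans_le (List.single_le_sum (by simp) _ (List.mem_map_of_mem ha))

lemma avoids_of_leaves_lt (h : t.leaves < S.leaves) : t.Avoids S :=
  fun _ hs hiso ↦ (hiso.leaves_eq ▸ hs.leaves_le).not_gt h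

/-- The number of leaves of the trees in an isomorphism class. -/
def IsoClass.leaves : IsoClass → ℕ := Quotient.lift RTree.leaves fun _ _ ↦ Iso.leaves_eq

@[simp] lemma IsoClass.leaves_mk (t : RTree) : (mk t).leaves = t.leaves := rfl

lemma IsoClass.leaves_eq_sum (hc : c.children ≠ 0) :
    c.leaves = (c.children.map leaves).sum := by
  obtain ⟨⟨l⟩, rfl⟩ := mk_surjective c
  have hl : l ≠ [] := by rintro rfl; exact hc rfl
  have hcomp : leaves ∘ mk = RTree.leaves := rfl
  rw [leaves_mk, leaves_node, if_neg hl, children_mk_node, Multiset.map_coe, List.map_map, hcomp,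
    Multiset.sum_coe]

end Leaves

section Avoiders

variable {S t u : RTree} {l : List RTree} {c : IsoClass}

lemma isHierarchy_node :
    (RTree.node l).IsHierarchy ↔ l.length ≠ 1 ∧ ∀ t ∈ l, t.IsHierarchy :=
  ⟨fun | .node h₁ h₂ => ⟨h₁, h₂⟩, fun ⟨h₁, h₂⟩ ↦ .node h₁ h₂⟩

lemma avoids_node :
    (RTree.node l).Avoids S ↔ (∀ t ∈ l, t.Avoids S) ∧ ¬ Iso (.node l) S := by
  refine ⟨fun h ↦ ⟨fun t ht s hs ↦ h s (.child ht hs), h _ (.refl _)⟩, fun ⟨h₁, h₂⟩ s hs ↦ ?_⟩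
  cases hs with
  | refl => exact h₂
  | child hc hs => exact h₁ _ hc s hs

/-- `t.IsAvoider S`: `t` is one of the hierarchies counted by `avoidCount S`. -/
def IsAvoider (t S : RTree) : Prop := t.IsHierarchy ∧ t.Avoids S

lemma isAvoider_node : (RTree.node l).IsAvoider S ↔
    l.length ≠ 1 ∧ (∀ t ∈ l, t.IsAvoider S) ∧ ¬ Iso (.node l) S := by
  simp only [IsAvoider, isHierarchy_node, avoids_node, forall₂_and]
  tauto

lemma Iso.isAvoider_eq (h : Iso t u) : t.IsAvoider S = u.IsAvoider S :=
  h.eq_of_recursive (f := fun t ↦ t.IsAvoider S)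
    (fun c s ↦ Multiset.card s ≠ 1 ∧ (∀ p ∈ s, p) ∧ c ≠ .mk S) fun l ↦ by
      simp only [isAvoider_node, Multiset.coe_card, List.length_map, Multiset.mem_coe,
        List.forall_mem_map, ne_eq, IsoClass.mk_eq_mk]

/-- The property `RTree.IsAvoider` of isomorphism classes. -/
def IsoClass.IsAvoider (S : RTree) : IsoClass → Prop :=
  Quotient.lift (fun t ↦ t.IsAvoider S) fun _ _ ↦ Iso.isAvoider_eq

@[simp] lemma IsoClass.isAvoider_mk : (mk t).IsAvoider S ↔ t.IsAvoider S := Iff.rfl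

lemma IsoClass.isAvoider_iff : c.IsAvoider S ↔
    Multiset.card c.children ≠ 1 ∧ (∀ d ∈ c.children, d.IsAvoider S) ∧ c ≠ mk S := by
  obtain ⟨⟨l⟩, rfl⟩ := mk_surjective c
  simp [isAvoider_node, mk_eq_mk]

end Avoiders

end RTree

namespace RTree

section AvoidingClass

variable {S : RTree}

/-- The isomorphism classes of hierarchies avoiding `S`. -/
abbrev AvoiderClass (S : RTree) : Type := {c : IsoClass // c.IsAvoider S}

lemma avoidCount_eq_natCard (S : RTree) (n : ℕ) :
    avoidCount S n = Nat.card {c : AvoiderClass S // c.1.leaves = n} := by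
  refine Nat.card_congr (Equiv.ofBijective (Quot.lift
    (fun t ↦ ⟨⟨.mk t.1, t.2.1, t.2.2.2⟩, t.2.2.1⟩)
    fun _ _ h ↦ Subtype.ext (Subtype.ext (IsoClass.mk_eq_mk.2 h))) ⟨?_, ?_⟩)
  · rintro ⟨t⟩ ⟨u⟩ h
    exact Quot.sound (IsoClass.mk_eq_mk.1 (congrArg (fun c ↦ c.1.1) h))
  · rintro ⟨⟨c, hc⟩, hn⟩
    obtain ⟨t, rfl⟩ := IsoClass.mk_surjective c
    exact ⟨Quot.mk _ ⟨t, hc.1, hn, hc.2⟩, rfl⟩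

/-- The class of the one-vertex tree, as an avoider of the larger tree `S`. -/
def leafClass (hS : 2 ≤ S.leaves) : AvoiderClass S :=
  ⟨.mk (.node []), .node (by simp) (by simp),
    avoids_of_leaves_lt (by rwa [leaves_node, if_pos rfl])⟩

/-- The classes of trees with at least two branches, all of them hierarchies avoiding `S`. -/
def classesWithAvoidingBranches (S : RTree) : Set IsoClass :=
  {c | 2 ≤ Multiset.card c.children ∧ ∀ d ∈ c.children, d.IsAvoider S}

lemma mk_mem_classesWithAvoidingBranches (hS : S.IsHierarchy) (hS2 : 2 ≤ S.leaves) :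
    .mk S ∈ classesWithAvoidingBranches S := by
  cases hS with | @node l hlen hl =>
  have h0 : l ≠ [] := by
    rintro rfl
    simp [leaves_node] at hS2
  have hbranch (t : RTree) (ht : t ∈ l) : t.IsAvoider (.node l) :=
    ⟨hl t ht, avoids_of_leaves_lt (leaves_lt_of_mem ht hlen)⟩
  have := List.length_pos_iff.2 h0
  exact ⟨by simp only [IsoClass.children_mk_node, Multiset.coe_card, List.length_map]; omega,
    by simpa using hbranch⟩

/-- All avoiders but the one-vertex tree, together with the class of `S` itself. -/
def avoiderOrExcluded (hS : 2 ≤ S.leaves) : Option {c // c ≠ leafClass hS} → IsoClass :=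
  fun o ↦ o.elim (.mk S) (·.1.1)

lemma avoiderOrExcluded_injective (hS : 2 ≤ S.leaves) :
    Function.Injective (avoiderOrExcluded hS) := by
  refine Option.injective_iff.2 ⟨Subtype.val_injective.comp Subtype.val_injective, ?_⟩
  rintro ⟨c, h⟩
  exact (IsoClass.isAvoider_iff.1 c.1.2).2.2 h

lemma range_avoiderOrExcluded (hS : S.IsHierarchy) (hS2 : 2 ≤ S.leaves) :
    Set.range (avoiderOrExcluded hS2) = classesWithAvoidingBranches S := by
  refine subset_antisymm (Set.range_subset_iff.2 fun o ↦ ?_) fun c ⟨hcard, hc⟩ ↦ ?_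
  · rcases o with - | ⟨⟨c, hc⟩, hne⟩
    · exact mk_mem_classesWithAvoidingBranches hS hS2
    · obtain ⟨h1, hall, -⟩ := IsoClass.isAvoider_iff.1 hc
      have h0 : Multiset.card c.children ≠ 0 := fun h ↦ hne <| Subtype.ext <|
        IsoClass.children_bijective.1 (Multiset.card_eq_zero.1 h)
      exact ⟨Nat.two_le_iff _ |>.2 ⟨h0, h1⟩, hall⟩
  · by_cases h : c = .mk S
    · exact ⟨none, h.symm⟩
    · refine ⟨some ⟨⟨c, IsoClass.isAvoider_iff.2 ⟨by omega, hc, h⟩⟩, ?_⟩, rfl⟩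
      intro hleaf
      rw [show c = .mk (.node []) from congrArg Subtype.val hleaf] at hcard
      simp at hcard

variable (hS : S.IsHierarchy) (hS2 : 2 ≤ S.leaves)

/-- The multiset of children of an `avoiderOrExcluded`, as a multiset of avoiders. -/
def avoiderChildren (o : Option {c // c ≠ leafClass hS2}) : Multiset (AvoiderClass S) :=
  (avoiderOrExcluded hS2 o).children.pmap Subtype.mk
    ((range_avoiderOrExcluded hS hS2).subset (Set.mem_range_self o)).2

lemma map_val_avoiderChildren (o : Option {c // c ≠ leafClass hS2}) :
    (avoiderChildren hS hS2 o).map Subtype.val = (avoiderOrExcluded hS2 o).children := by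
  simp [avoiderChildren, Multiset.map_pmap, Multiset.pmap_eq_map]

lemma avoiderChildren_injective : Function.Injective (avoiderChildren hS hS2) := fun o o' h ↦
  avoiderOrExcluded_injective hS2 <| IsoClass.children_bijective.1 <| by
    rw [← map_val_avoiderChildren hS, ← map_val_avoiderChildren hS, h]

lemma range_avoiderChildren :
    Set.range (avoiderChildren hS hS2) = {s | 2 ≤ Multiset.card s} := by
  refine subset_antisymm (Set.range_subset_iff.2 fun o ↦ ?_) fun s hs ↦ ?_
  · rw [Set.mem_ofPred_eq, ← Multiset.card_map Subtype.val, map_val_avoiderChildren]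
    exact ((range_avoiderOrExcluded hS hS2).subset (Set.mem_range_self o)).1
  · obtain ⟨c, hc⟩ := IsoClass.children_bijective.2 (s.map Subtype.val)
    obtain ⟨o, rfl⟩ : c ∈ Set.range (avoiderOrExcluded hS2) := by
      rw [range_avoiderOrExcluded hS, classesWithAvoidingBranches, Set.mem_ofPred_eq, hc,
        Multiset.card_map]
      exact ⟨hs, fun d hd ↦ by obtain ⟨a, -, rfl⟩ := Multiset.mem_map.1 hd; exact a.2⟩
    exact ⟨o, Multiset.map_injective Subtype.val_injective
      ((map_val_avoiderChildren hS hS2 o).trans hc)⟩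

lemma sum_leaves_avoiderChildren (o : Option {c // c ≠ leafClass hS2}) :
    ((avoiderChildren hS hS2 o).map fun c ↦ c.1.leaves).sum =
      (avoiderOrExcluded hS2 o).leaves := by
  have hcard := ((range_avoiderOrExcluded hS hS2).subset (Set.mem_range_self o)).1
  rw [IsoClass.leaves_eq_sum fun h ↦ by simp [h] at hcard, ← map_val_avoiderChildren hS,
    Multiset.map_map]
  rfl

/-- Hierarchies avoiding `S`, up to isomorphism and weighted by their size. -/
def avoidingClass : AvoidingClass (AvoiderClass S) where
  weight c := c.1.leaves
  weight_pos c := by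
    obtain ⟨t, ht⟩ := IsoClass.mk_surjective c.1
    exact ht ▸ leaves_pos t
  atom := leafClass hS2
  weight_atom := leaves_node []
  children := avoiderChildren hS hS2
  children_injective := avoiderChildren_injective hS hS2
  range_children := range_avoiderChildren hS hS2
  weight_eq_sum c := (sum_leaves_avoiderChildren hS hS2 (some c)).symm

lemma excludedWeight_avoidingClass :
    (avoidingClass hS hS2).excludedWeight = S.leaves :=
  sum_leaves_avoiderChildren hS hS2 none

end AvoidingClass

end RTree

/-- For a hierarchy `S` of size `m ≥ 2` with avoiding counts `H⁽ᵐ⁾ₙ` and radius of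
convergence `ρₘ`, one has `∑ₙ H⁽ᵐ⁾ₙ ρₘⁿ = (1 + ρₘ - ρₘ^m) / 2`. -/
theorem avoiding_series_value_at_radius {m : ℕ} (hm : 2 ≤ m) (S : RTree)
    (hS : S.IsHierarchy) (hSm : S.leaves = m) :
    (∑' n : ℕ, (avoidCount S n : ℝ) *
        ((radiusOf fun n => (avoidCount S n : ℝ)).toReal) ^ n) =
      (1 + (radiusOf fun n => (avoidCount S n : ℝ)).toReal -
        ((radiusOf fun n => (avoidCount S n : ℝ)).toReal) ^ m) / 2 := by
  subst hSm
  have hcount : avoidCount S = (RTree.avoidingClass hS hm).count :=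
    funext S.avoidCount_eq_natCard
  rw [hcount, ← RTree.excludedWeight_avoidingClass hS hm]
  exact (RTree.avoidingClass hS hm).tsum_count_at_radius rfl
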